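/- If μ is a non-negative zonal Borel measure on S^{n-1} with center of mass at the origin, then for every convex body K ⊂ ℝ^n the convolution h_K ∗ μ is again a support function of a convex body Ψ₁K, and the resulting map Ψ₁ : K^n → K^n is a continuous, translation invariant, SO(n) equivariant Minkowski valuation of degree 1. -/

import Mathlib

open scoped RealInnerProductSpace
open MeasureTheory

noncomputable section

abbrev Eucl (n : ℕ) := EuclideanSpace ℝ (Fin n)

/-- Support function of a convex body. -/
def suppFn {n : ℕ} (K : ConvexBody (Eucl n)) (u : Eucl n) : ℝ :=
  sSup ((fun x => ⟪u, x⟫) '' (K : Set (Eucl n)))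

/-!
The point is that the homogeneous extension `F` of `h_K ∗ μ` is subadditive. Given `x` and `y`,
identify a plane containing them with `ℂ`. Up to rotations fixing the pole, which `μ` does not see,
a rotation taking the pole to a point `z` of the unit circle is one taking it to `1`, followed by
multiplication by `z` in the plane and the identity on its orthogonal complement. Hence `F z` is
the integral of `h_K (z p + ‖z‖ q)` over the components `p`, `q` of a rotated copy of `μ`. This copy
is invariant under reflection in the plane, so the integrand may be replaced by the mean of
`h_K (z p + ‖z‖ q)` and `h_K (z p - ‖z‖ q)`. Here `z p` is linear in `z` and the dependence on `‖z‖`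
is monotone by convexity, so that subadditivity of `h_K` and of the norm carry over to `F`.
The reflection need not be a rotation, but in dimension at least three a zonal measure is invariant
under all isometries fixing the pole, as its characteristic function shows.

By Hahn–Banach `F` is a support function, and the remaining properties of the map `K ↦ Ψ₁ K` are
read off from support functions, which determine convex bodies isometrically.
-/

open Module Set
open scoped Pointwise

/-! ### Sublinear functionals -/

/-- Sublinear functionals, that is, positively homogeneous and subadditive ones. On a
finite-dimensional Euclidean space these are the support functions of convex bodies. -/
structure IsSublinear {V : Type*} [AddCommGroup V] [Module ℝ V] (h : V → ℝ) : Prop where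
  map_smul_of_pos : ∀ c : ℝ, 0 < c → ∀ x, h (c • x) = c * h x
  map_add_le : ∀ x y, h (x + y) ≤ h x + h y

namespace IsSublinear

section Module

variable {V W : Type*} [AddCommGroup V] [Module ℝ V] [AddCommGroup W] [Module ℝ W] {h : V → ℝ}

lemma map_zero (hh : IsSublinear h) : h 0 = 0 := by
  have double := hh.map_smul_of_pos 2 two_pos 0
  rw [smul_zero] at double
  linarith

lemma map_smul_of_nonneg (hh : IsSublinear h) {c : ℝ} (hc : 0 ≤ c) (x : V) :
    h (c • x) = c * h x := by
  rcases hc.eq_or_lt with rfl | hc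
  · simp [hh.map_zero]
  · exact hh.map_smul_of_pos c hc x

lemma mul_le_map_smul (hh : IsSublinear h) (c : ℝ) (x : V) : c * h x ≤ h (c • x) := by
  rcases le_or_gt 0 c with hc | hc
  · exact (hh.map_smul_of_nonneg hc x).ge
  · have opposite := hh.map_add_le (c • x) (-c • x)
    rw [← add_smul, add_neg_cancel, zero_smul, hh.map_zero,
      hh.map_smul_of_nonneg (neg_nonneg.2 hc.le)] at opposite
    linarith

lemma comp_linearMap (hh : IsSublinear h) (T : W →ₗ[ℝ] V) : IsSublinear fun x => h (T x) where
  map_smul_of_pos c hc x := by rw [map_smul, hh.map_smul_of_pos c hc]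
  map_add_le x y := by
    rw [map_add]
    exact hh.map_add_le _ _

lemma convexOn (hh : IsSublinear h) : ConvexOn ℝ univ h := by
  refine ⟨convex_univ, fun x _ y _ a b ha hb _ => ?_⟩
  calc h (a • x + b • y) ≤ h (a • x) + h (b • y) := hh.map_add_le _ _
    _ = a • h x + b • h y := by
      rw [hh.map_smul_of_nonneg ha, hh.map_smul_of_nonneg hb, smul_eq_mul, smul_eq_mul]

-- `t ↦ h (a + t • w) + h (a - t • w)` is convex and even, hence monotone on `[0, ∞)`.
lemma map_add_smul_add_map_sub_smul_le (hh : IsSublinear h) (a w : V) {r s : ℝ} (hrs : |r| ≤ s) :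
    h (a + r • w) + h (a - r • w) ≤ h (a + s • w) + h (a - s • w) := by
  let φ : ℝ → ℝ := fun t => h (a + t • w) + h (a - t • w)
  have φ_convex : ConvexOn ℝ univ φ := by
    have forward := hh.convexOn.comp_affineMap (AffineMap.lineMap a (a + w))
    have backward := hh.convexOn.comp_affineMap (AffineMap.lineMap a (a - w))
    refine (forward.add backward).congr fun t _ => ?_
    simp [φ, AffineMap.lineMap_apply, add_comm, sub_eq_add_neg]
  have φ_even : φ (-s) = φ s := by simp [φ, add_comm, sub_eq_add_neg]
  simpa [φ_even] using φ_convex.le_max_of_mem_Icc (mem_univ (-s)) (mem_univ s) (abs_le.1 hrs)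

lemma symmetrized_add_le (hh : IsSublinear h) (a b w : V) {r s t : ℝ} (hr : |r| ≤ s + t) :
    h (a + b + r • w) + h (a + b - r • w) ≤
      (h (a + s • w) + h (a - s • w)) + (h (b + t • w) + h (b - t • w)) := by
  have monotone := hh.map_add_smul_add_map_sub_smul_le (a + b) w hr
  have plus := hh.map_add_le (a + s • w) (b + t • w)
  have minus := hh.map_add_le (a - s • w) (b - t • w)
  rw [show a + s • w + (b + t • w) = a + b + (s + t) • w by module] at plus
  rw [show a - s • w + (b - t • w) = a + b - (s + t) • w by module] at minus
  linarith

end Module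

section FiniteDimensional

variable {E : Type*} [NormedAddCommGroup E] [NormedSpace ℝ E] [FiniteDimensional ℝ E] {h : E → ℝ}

protected lemma continuous (hh : IsSublinear h) : Continuous h :=
  hh.convexOn.locallyLipschitz.continuous

lemma exists_abs_le (hh : IsSublinear h) : ∃ C, ∀ x, |h x| ≤ C * ‖x‖ := by
  obtain ⟨C, hC⟩ := (isCompact_sphere (0 : E) 1).exists_bound_of_continuousOn
    hh.continuous.continuousOn
  refine ⟨C, fun x => ?_⟩
  rcases eq_or_ne x 0 with rfl | hx
  · simp [hh.map_zero]
  · have unit := hC (‖x‖⁻¹ • x) (by simp [norm_smul, hx])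
    rw [hh.map_smul_of_nonneg (by positivity), norm_mul, norm_inv, norm_norm, Real.norm_eq_abs,
      inv_mul_le_iff₀ (norm_pos_iff.2 hx)] at unit
    rwa [mul_comm]

lemma integrable [MeasurableSpace E] [BorelSpace E] (hh : IsSublinear h) {μ : Measure E}
    (hμ : Integrable id μ) : Integrable h μ := by
  obtain ⟨C, hC⟩ := hh.exists_abs_le
  exact (hμ.norm.const_mul C).mono' hh.continuous.aestronglyMeasurable (ae_of_all _ hC)

end FiniteDimensional

end IsSublinear

/-! ### Support functions -/

section SupportFunction

variable {E : Type*} [NormedAddCommGroup E] [InnerProductSpace ℝ E]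

/-- The support function of a subset of an inner product space; it takes the junk value `0` in
directions in which the set is unbounded, and everywhere if the set is empty. -/
def supportFn (s : Set E) (u : E) : ℝ :=
  sSup ((fun x => ⟪u, x⟫) '' s)

lemma bddAbove_inner_image {s : Set E} (hs : IsCompact s) (u : E) :
    BddAbove ((fun x => ⟪u, x⟫) '' s) :=
  hs.bddAbove_image (by fun_prop)

lemma inner_le_supportFn {s : Set E} (hs : IsCompact s) (u : E) {x : E} (hx : x ∈ s) :
    ⟪u, x⟫ ≤ supportFn s u :=
  le_csSup (bddAbove_inner_image hs u) (mem_image_of_mem _ hx)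

lemma supportFn_le {s : Set E} (hs : s.Nonempty) {u : E} {c : ℝ} (h : ∀ x ∈ s, ⟪u, x⟫ ≤ c) :
    supportFn s u ≤ c :=
  csSup_le (hs.image _) (forall_mem_image.2 h)

lemma exists_inner_eq_supportFn {s : Set E} (hs : IsCompact s) (hne : s.Nonempty) (u : E) :
    ∃ x ∈ s, ⟪u, x⟫ = supportFn s u :=
  (hs.image (by fun_prop)).sSup_mem (hne.image _)

lemma isSublinear_supportFn {s : Set E} (hs : IsCompact s) (hne : s.Nonempty) :
    IsSublinear (supportFn s) where
  map_smul_of_pos c hc u := by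
    simp only [supportFn, real_inner_smul_left]
    rw [← smul_eq_mul c, ← Real.sSup_smul_of_nonneg hc.le, ← image_smul, image_image]
    rfl
  map_add_le u v := supportFn_le hne fun x hx => by
    rw [inner_add_left]
    exact add_le_add (inner_le_supportFn hs u hx) (inner_le_supportFn hs v hx)

lemma supportFn_smul_set {c : ℝ} (hc : 0 ≤ c) (s : Set E) (u : E) :
    supportFn (c • s) u = c * supportFn s u := by
  simp only [supportFn, ← image_smul, image_image, real_inner_smul_right]
  rw [← smul_eq_mul c, ← Real.sSup_smul_of_nonneg hc, ← image_smul, image_image]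
  rfl

lemma supportFn_image_isometry (g : E ≃ₗᵢ[ℝ] E) (s : Set E) (u : E) :
    supportFn (g '' s) u = supportFn s (g⁻¹ u) := by
  have inner_map (x : E) : ⟪u, g x⟫ = ⟪g⁻¹ u, x⟫ := by
    rw [real_inner_comm, g.inner_map_eq_flip, real_inner_comm, LinearIsometryEquiv.coe_inv]
  simp only [supportFn, image_image, inner_map]

lemma supportFn_add {s t : Set E} (hs : IsCompact s) (hsne : s.Nonempty) (ht : IsCompact t)
    (htne : t.Nonempty) (u : E) : supportFn (s + t) u = supportFn s u + supportFn t u := by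
  rw [supportFn, supportFn, supportFn, ← csSup_add (hsne.image _) (bddAbove_inner_image hs u)
    (htne.image _) (bddAbove_inner_image ht u)]
  exact congrArg sSup (image_add (innerₗ E u))

lemma supportFn_translate {s : Set E} (hs : IsCompact s) (hne : s.Nonempty) (x u : E) :
    supportFn ((fun y => x + y) '' s) u = supportFn s u + ⟪u, x⟫ := by
  have image_eq : (fun y => x + y) '' s = s + ({x} : Set E) := by simp [add_comm x]
  rw [image_eq, supportFn_add hs hne isCompact_singleton (singleton_nonempty x)]
  simp [supportFn]

lemma supportFn_union {s t : Set E} (hs : IsCompact s) (hsne : s.Nonempty) (ht : IsCompact t)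
    (htne : t.Nonempty) (u : E) :
    supportFn (s ∪ t) u = max (supportFn s u) (supportFn t u) := by
  rw [supportFn, image_union, csSup_union (bddAbove_inner_image hs u) (hsne.image _)
    (bddAbove_inner_image ht u) (htne.image _)]
  rfl

lemma inter_segment_nonempty {s t : Set E} (hs : IsClosed s) (ht : IsClosed t)
    (hst : Convex ℝ (s ∪ t)) {x y : E} (hx : x ∈ s) (hy : y ∈ t) :
    (segment ℝ x y ∩ (s ∩ t)).Nonempty :=
  isPreconnected_closed_iff.1 (convex_segment (𝕜 := ℝ) x y).isPreconnected s t hs ht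
    (hst.segment_subset (.inl hx) (.inr hy)) ⟨x, left_mem_segment ℝ x y, hx⟩
    ⟨y, right_mem_segment ℝ x y, hy⟩

-- A segment joining maximizers of `⟪u, ·⟫` on `s` and on `t` meets `s ∩ t`.
lemma supportFn_inter {s t : Set E} (hs : IsCompact s) (hsne : s.Nonempty) (ht : IsCompact t)
    (htne : t.Nonempty) (hst : Convex ℝ (s ∪ t)) (u : E) :
    supportFn (s ∩ t) u = min (supportFn s u) (supportFn t u) := by
  obtain ⟨x, hx, hxu⟩ := exists_inner_eq_supportFn hs hsne u
  obtain ⟨y, hy, hyu⟩ := exists_inner_eq_supportFn ht htne u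
  obtain ⟨z, hz, hzst⟩ := inter_segment_nonempty hs.isClosed ht.isClosed hst hx hy
  apply le_antisymm
  · exact supportFn_le ⟨z, hzst⟩ fun w hw =>
      le_min (inner_le_supportFn hs u hw.1) (inner_le_supportFn ht u hw.2)
  · calc min (supportFn s u) (supportFn t u) = min ⟪u, x⟫ ⟪u, y⟫ := by rw [hxu, hyu]
      _ ≤ ⟪u, z⟫ := ((innerₗ E u).concaveOn convex_univ).min_le_of_mem_segment
        (mem_univ x) (mem_univ y) hz
      _ ≤ supportFn (s ∩ t) u := inner_le_supportFn (hs.inter ht) u hzst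

lemma supportFn_union_add_supportFn_inter {s t : Set E} (hs : IsCompact s) (hsne : s.Nonempty)
    (ht : IsCompact t) (htne : t.Nonempty) (hst : Convex ℝ (s ∪ t)) (u : E) :
    supportFn (s ∪ t) u + supportFn (s ∩ t) u = supportFn s u + supportFn t u := by
  rw [supportFn_union hs hsne ht htne, supportFn_inter hs hsne ht htne hst, max_add_min]

lemma exists_mem_dist_le_of_inner_le_supportFn_add {s : Set E} (hs : IsCompact s)
    (hne : s.Nonempty) (hconv : Convex ℝ s) {y : E} {δ : ℝ} (hδ : 0 ≤ δ)
    (h : ∀ u, ‖u‖ = 1 → ⟪u, y⟫ ≤ supportFn s u + δ) : ∃ z ∈ s, dist y z ≤ δ := by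
  obtain ⟨z, hz, hmin⟩ :=
    exists_norm_eq_iInf_of_complete_convex hne hs.isComplete hconv y
  rw [norm_eq_iInf_iff_real_inner_le_zero hconv hz] at hmin
  refine ⟨z, hz, ?_⟩
  rw [dist_eq_norm]
  rcases eq_or_ne (y - z) 0 with hyz | hyz
  · simpa [hyz] using hδ
  have support_at_z : supportFn s (y - z) ≤ ⟪y - z, z⟫ := supportFn_le hne fun w hw => by
    simpa only [inner_sub_right, sub_nonpos] using hmin w hw
  have separation := h (‖y - z‖⁻¹ • (y - z)) (by simp [norm_smul, hyz])
  rw [(isSublinear_supportFn hs hne).map_smul_of_nonneg (by positivity), real_inner_smul_left,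
    ← sub_le_iff_le_add', ← mul_sub, inv_mul_le_iff₀ (norm_pos_iff.2 hyz)] at separation
  have norm_sq : ‖y - z‖ * ‖y - z‖ = ⟪y - z, y⟫ - ⟪y - z, z⟫ := by
    rw [← inner_sub_right, real_inner_self_eq_norm_mul_norm]
  exact le_of_mul_le_mul_left (by linarith) (norm_pos_iff.2 hyz)

lemma dist_le_of_abs_supportFn_sub_le {K L : ConvexBody E} {δ : ℝ} (hδ : 0 ≤ δ)
    (h : ∀ u, ‖u‖ = 1 → |supportFn K u - supportFn (L : Set E) u| ≤ δ) : dist K L ≤ δ := by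
  rw [← ConvexBody.hausdorffDist_coe]
  refine Metric.hausdorffDist_le_of_mem_dist hδ (fun x hx => ?_) fun x hx => ?_
  · refine exists_mem_dist_le_of_inner_le_supportFn_add L.isCompact L.nonempty L.convex hδ
      fun u hu => ?_
    linarith [inner_le_supportFn K.isCompact u hx, (abs_le.1 (h u hu)).2]
  · refine exists_mem_dist_le_of_inner_le_supportFn_add K.isCompact K.nonempty K.convex hδ
      fun u hu => ?_
    linarith [inner_le_supportFn L.isCompact u hx, (abs_le.1 (h u hu)).1]

lemma convexBody_eq_of_supportFn_eq {K L : ConvexBody E}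
    (h : ∀ u, ‖u‖ = 1 → supportFn K u = supportFn (L : Set E) u) : K = L :=
  dist_le_zero.1 <| dist_le_of_abs_supportFn_sub_le le_rfl fun u hu => by simp [h u hu]

lemma supportFn_sub_le_norm_mul_dist (K L : ConvexBody E) (u : E) :
    supportFn K u - supportFn (L : Set E) u ≤ ‖u‖ * dist K L := by
  obtain ⟨x, hx, hxu⟩ := exists_inner_eq_supportFn K.isCompact K.nonempty u
  obtain ⟨y, hy, hxy⟩ := L.isCompact.exists_infDist_eq_dist L.nonempty x
  have hdist : dist x y ≤ dist K L := by
    rw [← hxy, ← ConvexBody.hausdorffDist_coe]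
    exact Metric.infDist_le_hausdorffDist_of_mem hx ConvexBody.hausdorffEDist_ne_top
  calc supportFn K u - supportFn (L : Set E) u ≤ ⟪u, x⟫ - ⟪u, y⟫ := by
        rw [hxu]
        exact sub_le_sub_left (inner_le_supportFn L.isCompact u hy) _
    _ = ⟪u, x - y⟫ := (inner_sub_right u x y).symm
    _ ≤ ‖u‖ * ‖x - y‖ := real_inner_le_norm u (x - y)
    _ ≤ ‖u‖ * dist K L := by
        rw [← dist_eq_norm]
        gcongr

lemma abs_supportFn_sub_le_norm_mul_dist (K L : ConvexBody E) (u : E) :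
    |supportFn K u - supportFn (L : Set E) u| ≤ ‖u‖ * dist K L :=
  abs_sub_le_iff.2 ⟨supportFn_sub_le_norm_mul_dist K L u,
    dist_comm K L ▸ supportFn_sub_le_norm_mul_dist L K u⟩

end SupportFunction

section WulffShape

variable {E : Type*} [NormedAddCommGroup E] [InnerProductSpace ℝ E]

/-- The Wulff shape of `h`: the largest set whose support function is at most `h`. -/
def wulffShape (h : E → ℝ) : Set E :=
  {y | ∀ x, ⟪x, y⟫ ≤ h x}

lemma wulffShape_eq_iInter (h : E → ℝ) : wulffShape h = ⋂ x, {y | ⟪x, y⟫ ≤ h x} :=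
  Set.ofPred_forall _

lemma convex_wulffShape (h : E → ℝ) : Convex ℝ (wulffShape h) := by
  rw [wulffShape_eq_iInter]
  exact convex_iInter fun x => convex_halfSpace_le (innerₗ E x).isLinear (h x)

lemma isClosed_wulffShape (h : E → ℝ) : IsClosed (wulffShape h) := by
  rw [wulffShape_eq_iInter]
  exact isClosed_iInter fun x => isClosed_le (by fun_prop) continuous_const

variable [FiniteDimensional ℝ E] {h : E → ℝ}

lemma isCompact_wulffShape (hh : IsSublinear h) : IsCompact (wulffShape h) := by
  obtain ⟨C, hC⟩ := hh.exists_abs_le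
  refine (isCompact_closedBall (0 : E) (max C 0)).of_isClosed_subset (isClosed_wulffShape h)
    fun y hy => ?_
  rw [mem_closedBall_zero_iff, le_max_iff, or_iff_not_imp_right, norm_le_zero_iff]
  intro hy0
  refine le_of_mul_le_mul_right ?_ (norm_pos_iff.2 hy0)
  calc ‖y‖ * ‖y‖ = ⟪y, y⟫ := (real_inner_self_eq_norm_mul_norm y).symm
    _ ≤ h y := hy y
    _ ≤ C * ‖y‖ := (le_abs_self _).trans (hC y)

-- Hahn–Banach extension of `c • v ↦ c * h v`.
lemma exists_mem_wulffShape_inner_eq (hh : IsSublinear h) (v : E) :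
    ∃ y ∈ wulffShape h, ⟪v, y⟫ = h v := by
  have well_defined : ∀ c : ℝ, c • v = 0 → c • h v = 0 := fun c hc => by
    rcases smul_eq_zero.1 hc with rfl | rfl
    · exact zero_smul ℝ _
    · rw [hh.map_zero, smul_zero]
  obtain ⟨g, g_extends, g_le⟩ := exists_extension_of_le_sublinear
    (LinearPMap.mkSpanSingleton' v (h v) well_defined) h hh.map_smul_of_pos hh.map_add_le (by
      rintro ⟨x, hx⟩
      obtain ⟨c, rfl⟩ := Submodule.mem_span_singleton.1 hx
      exact (LinearPMap.mkSpanSingleton'_apply v (h v) well_defined c hx).trans_le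
        (hh.mul_le_map_smul c v))
  have g_eq_inner (x : E) :
      ⟪x, (InnerProductSpace.toDual ℝ E).symm (LinearMap.toContinuousLinearMap g)⟫ = g x := by
    rw [real_inner_comm, InnerProductSpace.toDual_symm_apply, LinearMap.coe_toContinuousLinearMap']
  refine ⟨_, fun x => (g_eq_inner x).trans_le (g_le x), (g_eq_inner v).trans ?_⟩
  exact (g_extends ⟨v, Submodule.mem_span_singleton_self v⟩).trans
    (LinearPMap.mkSpanSingleton'_apply_self v (h v) well_defined _)

lemma exists_convexBody_supportFn_eq (hh : IsSublinear h) :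
    ∃ K : ConvexBody E, ∀ u, supportFn K u = h u := by
  obtain ⟨y₀, hy₀, -⟩ := exists_mem_wulffShape_inner_eq hh 0
  refine ⟨⟨wulffShape h, convex_wulffShape h, isCompact_wulffShape hh, y₀, hy₀⟩, fun u => ?_⟩
  obtain ⟨y, hy, hyu⟩ := exists_mem_wulffShape_inner_eq hh u
  exact le_antisymm (supportFn_le ⟨y, hy⟩ fun x hx => hx u)
    (hyu ▸ inner_le_supportFn (isCompact_wulffShape hh) u hy)

end WulffShape

/-! ### Rotations and reflections -/

section Isometry

variable {E : Type*} [NormedAddCommGroup E] [InnerProductSpace ℝ E]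

/-- The determinant as a homomorphism on the orthogonal group; its kernel is the rotation group. -/
def isometryDet : (E ≃ₗᵢ[ℝ] E) →* ℝˣ where
  toFun g := LinearEquiv.det g.toLinearEquiv
  map_one' := map_one LinearEquiv.det
  map_mul' g g' := map_mul LinearEquiv.det g.toLinearEquiv g'.toLinearEquiv

variable [FiniteDimensional ℝ E]

lemma isometryDet_eq_one_or_neg_one (g : E ≃ₗᵢ[ℝ] E) :
    isometryDet g = 1 ∨ isometryDet g = -1 := by
  have abs_det : |(isometryDet g : ℝ)| = 1 := by
    rw [← g.toLinearIsometry.normDet_eq_one, LinearMap.normDet_eq_abs_det]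
    exact congrArg abs (LinearEquiv.coe_det g.toLinearEquiv)
  exact ((abs_eq zero_le_one).1 abs_det).imp (fun h => Units.ext h) (fun h => Units.ext h)

lemma exists_reflection_fixing {S : Submodule ℝ E} (hS : S ≠ ⊤) :
    ∃ σ : E ≃ₗᵢ[ℝ] E, (∀ x ∈ S, σ x = x) ∧ isometryDet σ = -1 := by
  obtain ⟨q, hq, hq0⟩ :=
    Submodule.exists_mem_ne_zero_of_ne_bot (mt S.orthogonal_eq_bot_iff.1 hS)
  refine ⟨(Submodule.span ℝ {q})ᗮ.reflection, fun x hx => ?_, ?_⟩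
  · refine Submodule.reflection_mem_subspace_eq_self ?_
    exact Submodule.mem_orthogonal_singleton_iff_inner_left.2 (hq x hx)
  · refine (Submodule.linearEquiv_det_reflection _).trans ?_
    rw [Submodule.orthogonal_orthogonal, finrank_span_singleton hq0, pow_one]

end Isometry

/-! ### Zonal measures -/

section Zonal

variable {E : Type*} [NormedAddCommGroup E] [InnerProductSpace ℝ E] [MeasurableSpace E]

/-- A measure is zonal with pole `e` if it is invariant under the rotations fixing `e`. -/
def IsZonal (e : E) (μ : Measure E) : Prop :=
  ∀ g : E ≃ₗᵢ[ℝ] E, g e = e → isometryDet g = 1 → μ.map g = μ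

variable [BorelSpace E]

lemma integral_isometry_map (μ : Measure E) (g : E ≃ₗᵢ[ℝ] E) {F : Type*} [NormedAddCommGroup F]
    [NormedSpace ℝ F] (f : E → F) : ∫ u, f u ∂μ.map g = ∫ u, f (g u) ∂μ :=
  g.toHomeomorph.measurableEmbedding.integral_map f

lemma charFun_isometry_map (μ : Measure E) (g : E ≃ₗᵢ[ℝ] E) (t : E) :
    charFun (μ.map g) t = charFun μ (g⁻¹ t) := by
  simp only [charFun_apply, integral_isometry_map, g.inner_map_eq_flip, LinearIsometryEquiv.coe_inv]

variable {e : E} {μ : Measure E}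

lemma IsZonal.integral_comp_eq (hμ : IsZonal e μ) {g g' : E ≃ₗᵢ[ℝ] E} (he : g e = g' e)
    (hg : isometryDet g = 1) (hg' : isometryDet g' = 1) (f : E → ℝ) :
    ∫ u, f (g u) ∂μ = ∫ u, f (g' u) ∂μ := by
  have fix : (g⁻¹ * g') e = e := by
    rw [LinearIsometryEquiv.coe_mul, Function.comp_apply, ← he, LinearIsometryEquiv.coe_inv,
      g.symm_apply_apply]
  have invariant := hμ (g⁻¹ * g') fix (by rw [map_mul, map_inv, hg, hg', inv_one, one_mul])
  calc ∫ u, f (g u) ∂μ = ∫ u, f (g u) ∂μ.map (g⁻¹ * g' : E ≃ₗᵢ[ℝ] E) := by rw [invariant]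
    _ = ∫ u, f (g' u) ∂μ := by
      rw [integral_isometry_map]
      simp only [LinearIsometryEquiv.coe_mul, Function.comp_apply, LinearIsometryEquiv.coe_inv,
        g.apply_symm_apply]

variable [FiniteDimensional ℝ E] [IsFiniteMeasure μ]

-- The value of the characteristic function at `t` only involves `g⁻¹ t`, so `g` may be replaced
-- by a rotation agreeing with it on the plane spanned by `e` and `g⁻¹ t`.
lemma IsZonal.map_eq_of_three_le_finrank (hμ : IsZonal e μ) (hE : 3 ≤ finrank ℝ E)
    {g : E ≃ₗᵢ[ℝ] E} (hg : g e = e) : μ.map g = μ := by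
  rcases isometryDet_eq_one_or_neg_one g with det_g | det_g
  · exact hμ g hg det_g
  refine Measure.ext_of_charFun (funext fun t => ?_)
  have span_ne_top : Submodule.span ℝ {e, g⁻¹ t} ≠ ⊤ := by
    classical
    refine (span_lt_top_of_card_lt_finrank (lt_of_le_of_lt ?_ hE)).ne
    simpa using Finset.card_le_two
  obtain ⟨σ, σ_fix, det_σ⟩ := exists_reflection_fixing span_ne_top
  have σ_e : σ e = e := σ_fix e (Submodule.subset_span (by simp))
  have σ_t : σ (g⁻¹ t) = g⁻¹ t := σ_fix _ (Submodule.subset_span (by simp))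
  have invariant := hμ (g * σ) (by rw [LinearIsometryEquiv.coe_mul, Function.comp_apply, σ_e, hg])
    (by rw [map_mul, det_g, det_σ, neg_mul_neg, one_mul])
  calc charFun (μ.map g) t = charFun μ ((g * σ)⁻¹ t) := by
        rw [charFun_isometry_map, mul_inv_rev, LinearIsometryEquiv.coe_mul, Function.comp_apply,
          LinearIsometryEquiv.coe_inv σ, ← σ_t, σ.symm_apply_apply, σ_t]
    _ = charFun μ t := by rw [← charFun_isometry_map, invariant]

lemma IsZonal.integral_comp_reflection (hμ : IsZonal e μ) {P : Submodule ℝ E}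
    (hP : 2 ≤ finrank ℝ P) {g : E ≃ₗᵢ[ℝ] E} (hge : g e ∈ P) (f : E → ℝ) :
    ∫ u, f (P.reflection (g u)) ∂μ = ∫ u, f (g u) ∂μ := by
  rcases eq_or_ne P ⊤ with rfl | hP_top
  · simp only [Submodule.reflection_mem_subspace_eq_self Submodule.mem_top]
  have fix : (g⁻¹ * P.reflection * g) e = e := by
    simp only [LinearIsometryEquiv.coe_mul, Function.comp_apply,
      Submodule.reflection_mem_subspace_eq_self hge, LinearIsometryEquiv.coe_inv,
      g.symm_apply_apply]
  have invariant := hμ.map_eq_of_three_le_finrank (hP.trans_lt (Submodule.finrank_lt hP_top)) fix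
  calc ∫ u, f (P.reflection (g u)) ∂μ
      = ∫ u, f (g u) ∂μ.map (g⁻¹ * P.reflection * g : E ≃ₗᵢ[ℝ] E) := by
        rw [integral_isometry_map]
        simp only [LinearIsometryEquiv.coe_mul, Function.comp_apply, LinearIsometryEquiv.coe_inv,
          g.apply_symm_apply]
    _ = ∫ u, f (g u) ∂μ := by rw [invariant]

end Zonal

/-! ### Planes as isometric copies of `ℂ` -/

section Plane

variable {E : Type*} [NormedAddCommGroup E] [InnerProductSpace ℝ E]

lemma finrank_range_plane (ι : ℂ →ₗᵢ[ℝ] E) :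
    finrank ℝ (LinearMap.range ι.toLinearMap) = 2 := by
  rw [LinearMap.finrank_range_of_inj ι.injective, Complex.finrank_real_complex]

variable [FiniteDimensional ℝ E]

lemma nonempty_linearIsometry_of_finrank_le {F : Type*} [NormedAddCommGroup F]
    [InnerProductSpace ℝ F] [FiniteDimensional ℝ F] (h : finrank ℝ F ≤ finrank ℝ E) :
    Nonempty (F →ₗᵢ[ℝ] E) := by
  let b := stdOrthonormalBasis ℝ F
  let f : F →ₗ[ℝ] E := b.toBasis.constr ℝ (stdOrthonormalBasis ℝ E ∘ Fin.castLE h)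
  have f_orthonormal : Orthonormal ℝ (f ∘ b.toBasis) := by
    have f_basis : f ∘ b.toBasis = stdOrthonormalBasis ℝ E ∘ Fin.castLE h :=
      funext fun i => b.toBasis.constr_basis ℝ _ i
    rw [f_basis]
    exact (stdOrthonormalBasis ℝ E).orthonormal.comp _ (Fin.castLE_injective h)
  exact ⟨f.isometryOfOrthonormal (b.coe_toBasis ▸ b.orthonormal) f_orthonormal⟩

-- Embed the span of `x` and `y` into `ℂ` and `ℂ` into `E`; an isometry of `E`
-- extending the composition moves the second embedding onto a plane containing the span.
lemma exists_linearIsometry_complex_mem_range (hE : 2 ≤ finrank ℝ E) (x y : E) :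
    ∃ ι : ℂ →ₗᵢ[ℝ] E, x ∈ range ι ∧ y ∈ range ι := by
  let S : Submodule ℝ E := Submodule.span ℝ {x, y}
  have finrank_S : finrank ℝ S ≤ finrank ℝ ℂ := by
    classical
    rw [Complex.finrank_real_complex]
    refine (finrank_span_le_card _).trans ?_
    simpa using Finset.card_le_two
  obtain ⟨j⟩ := nonempty_linearIsometry_of_finrank_le finrank_S
  obtain ⟨k⟩ := nonempty_linearIsometry_of_finrank_le (Complex.finrank_real_complex.trans_le hE)
  let g : E ≃ₗᵢ[ℝ] E := (k.comp j).extend.toLinearIsometryEquiv rfl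
  have g_apply (s : S) : g s = k (j s) := (k.comp j).extend_apply s
  have mem_range (s : S) : (s : E) ∈ range (g.symm.toLinearIsometry.comp k) :=
    ⟨j s, g.symm_apply_eq.2 (g_apply s).symm⟩
  exact ⟨g.symm.toLinearIsometry.comp k,
    mem_range ⟨x, Submodule.subset_span (by simp)⟩, mem_range ⟨y, Submodule.subset_span (by simp)⟩⟩

variable (ι : ℂ →ₗᵢ[ℝ] E)

/-- The complex coordinate of the orthogonal projection to the plane `range ι`. -/
def planeCoord : E →ₗ[ℝ] ℂ :=
  LinearMap.adjoint ι.toLinearMap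

lemma inner_planeCoord (w : E) (z : ℂ) : ⟪planeCoord ι w, z⟫ = ⟪w, ι z⟫ :=
  LinearMap.adjoint_inner_left ι.toLinearMap z w

lemma planeCoord_apply_self (z : ℂ) : planeCoord ι (ι z) = z :=
  ext_inner_right ℝ fun z' => by rw [inner_planeCoord, ι.inner_map_map]

lemma inner_map_sub_planeCoord (z : ℂ) (w : E) : ⟪ι z, w - ι (planeCoord ι w)⟫ = 0 := by
  rw [inner_sub_right, ι.inner_map_map, real_inner_comm, ← inner_planeCoord, real_inner_comm,
    sub_self]

lemma reflection_range_plane (w : E) :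
    (LinearMap.range ι.toLinearMap).reflection w =
      ι (planeCoord ι w) - (w - ι (planeCoord ι w)) := by
  have projection : (LinearMap.range ι.toLinearMap).starProjection w = ι (planeCoord ι w) :=
    Submodule.eq_starProjection_of_mem_of_inner_eq_zero (LinearMap.mem_range_self _ _) (by
      rintro _ ⟨z, rfl⟩
      exact (real_inner_comm _ _).trans (inner_map_sub_planeCoord ι z w))
  rw [Submodule.reflection_apply, projection]
  module

/-- The similarity of `E` that multiplies by `z` in the plane `range ι` and by `‖z‖` in its
orthogonal complement. -/
def planeSimilarity (z : ℂ) : E →ₗ[ℝ] E :=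
  ι.toLinearMap ∘ₗ LinearMap.mulLeft ℝ z ∘ₗ planeCoord ι +
    ‖z‖ • (LinearMap.id - ι.toLinearMap ∘ₗ planeCoord ι)

lemma planeSimilarity_apply (z : ℂ) (w : E) :
    planeSimilarity ι z w = ι (z * planeCoord ι w) + ‖z‖ • (w - ι (planeCoord ι w)) :=
  rfl

lemma planeSimilarity_map (z z' : ℂ) : planeSimilarity ι z (ι z') = ι (z * z') := by
  simp [planeSimilarity_apply, planeCoord_apply_self]

lemma planeCoord_planeSimilarity (z : ℂ) (w : E) :
    planeCoord ι (planeSimilarity ι z w) = z * planeCoord ι w := by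
  simp [planeSimilarity_apply, planeCoord_apply_self]

lemma planeSimilarity_mul (z z' : ℂ) (w : E) :
    planeSimilarity ι (z * z') w = planeSimilarity ι z (planeSimilarity ι z' w) := by
  rw [planeSimilarity_apply ι z, planeCoord_planeSimilarity, planeSimilarity_apply,
    planeSimilarity_apply, add_sub_cancel_left, norm_mul, mul_smul, mul_assoc]

lemma planeSimilarity_ofReal {r : ℝ} (hr : 0 ≤ r) (w : E) :
    planeSimilarity ι (r : ℂ) w = r • w := by
  rw [planeSimilarity_apply, Complex.norm_of_nonneg hr, ← Complex.real_smul, map_smul]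
  module

lemma planeSimilarity_reflection (z : ℂ) (w : E) :
    planeSimilarity ι z ((LinearMap.range ι.toLinearMap).reflection w) =
      ι (z * planeCoord ι w) - ‖z‖ • (w - ι (planeCoord ι w)) := by
  rw [reflection_range_plane, map_sub, planeSimilarity_map, planeSimilarity_apply ι z (w - _)]
  simp [planeCoord_apply_self]

lemma norm_planeSimilarity (z : ℂ) (w : E) : ‖planeSimilarity ι z w‖ = ‖z‖ * ‖w‖ := by
  refine (sq_eq_sq₀ (norm_nonneg _) (by positivity)).1 ?_
  have normal : ‖w‖ ^ 2 = ‖planeCoord ι w‖ ^ 2 + ‖w - ι (planeCoord ι w)‖ ^ 2 := by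
    have := norm_add_sq_eq_norm_sq_add_norm_sq_real
      (inner_map_sub_planeCoord ι (planeCoord ι w) w)
    simpa [sq] using this
  have image := norm_add_sq_eq_norm_sq_add_norm_sq_real
    (show ⟪ι (z * planeCoord ι w), ‖z‖ • (w - ι (planeCoord ι w))⟫ = 0 by
      rw [real_inner_smul_right, inner_map_sub_planeCoord, mul_zero])
  rw [planeSimilarity_apply, sq, image, ι.norm_map, norm_mul, norm_smul, norm_norm]
  linear_combination -‖z‖ ^ 2 * normal

-- A rotation of the plane is a square, and squares of isometries have determinant one.
lemma exists_rotation_eq_planeSimilarity (c : Circle) :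
    ∃ g : E ≃ₗᵢ[ℝ] E, isometryDet g = 1 ∧ ∀ w, g w = planeSimilarity ι c w := by
  obtain ⟨d, rfl⟩ : ∃ d : Circle, d * d = c :=
    ⟨Circle.exp (Complex.arg c / 2), by rw [← Circle.exp_add, add_halves, Circle.exp_arg]⟩
  let g : E ≃ₗᵢ[ℝ] E := LinearIsometry.toLinearIsometryEquiv
    ⟨planeSimilarity ι d, fun w => by rw [norm_planeSimilarity, Circle.norm_coe, one_mul]⟩ rfl
  refine ⟨g * g, ?_, fun w => (planeSimilarity_mul ι d d w).symm⟩
  rcases isometryDet_eq_one_or_neg_one g with det_g | det_g <;> simp [det_g]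

end Plane

/-! ### Convolution with a zonal measure -/

section PlaneSymmetrization

variable {E : Type*} [NormedAddCommGroup E] [InnerProductSpace ℝ E] [FiniteDimensional ℝ E]

/-- The sum of the values of `h` at the image of `w` under `planeSimilarity ι z` and at its mirror
image in the plane `range ι`. -/
def planeSymmetrization (h : E → ℝ) (ι : ℂ →ₗᵢ[ℝ] E) (z : ℂ) (w : E) : ℝ :=
  h (planeSimilarity ι z w) +
    h (planeSimilarity ι z ((LinearMap.range ι.toLinearMap).reflection w))

-- The component in the plane is linear in `z`; the normal one depends on `z` only through the
-- subadditive `‖z‖`, and monotonically so because of the symmetrization.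
lemma planeSymmetrization_add_le {h : E → ℝ} (hh : IsSublinear h) (ι : ℂ →ₗᵢ[ℝ] E) (z z' : ℂ)
    (w : E) : planeSymmetrization h ι (z + z') w ≤
      planeSymmetrization h ι z w + planeSymmetrization h ι z' w := by
  simp only [planeSymmetrization, planeSimilarity_reflection]
  simp only [planeSimilarity_apply, add_mul, map_add]
  exact hh.symmetrized_add_le _ _ _ ((abs_norm (z + z')).trans_le (norm_add_le z z'))

variable [MeasurableSpace E] [BorelSpace E] {μ : Measure E} {h : E → ℝ}

lemma integrable_comp_planeSimilarity (hint : Integrable id μ) (hh : IsSublinear h)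
    (ι : ℂ →ₗᵢ[ℝ] E) (z : ℂ) (g : E ≃ₗᵢ[ℝ] E) :
    Integrable (fun u => h (planeSimilarity ι z (g u))) μ :=
  (hh.comp_linearMap (planeSimilarity ι z ∘ₗ g.toLinearEquiv.toLinearMap)).integrable hint

lemma integrable_comp_planeSimilarity_reflection (hint : Integrable id μ) (hh : IsSublinear h)
    (ι : ℂ →ₗᵢ[ℝ] E) (z : ℂ) (g : E ≃ₗᵢ[ℝ] E) :
    Integrable (fun u => h (planeSimilarity ι z
      ((LinearMap.range ι.toLinearMap).reflection (g u)))) μ :=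
  integrable_comp_planeSimilarity hint hh ι z
    (g.trans (LinearMap.range ι.toLinearMap).reflection)

lemma integrable_planeSymmetrization (hint : Integrable id μ) (hh : IsSublinear h)
    (ι : ℂ →ₗᵢ[ℝ] E) (z : ℂ) (g : E ≃ₗᵢ[ℝ] E) :
    Integrable (fun u => planeSymmetrization h ι z (g u)) μ :=
  (integrable_comp_planeSimilarity hint hh ι z g).add
    (integrable_comp_planeSimilarity_reflection hint hh ι z g)

end PlaneSymmetrization

section Convolution

variable {E : Type*} [NormedAddCommGroup E] [InnerProductSpace ℝ E]

/-- A choice, for every unit vector `v`, of a rotation taking the pole `e` to `v`. -/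
def IsPoleSection (e : E) (R : E → E ≃ₗᵢ[ℝ] E) : Prop :=
  ∀ v, ‖v‖ = 1 → R v e = v ∧ isometryDet (R v) = 1

variable [MeasurableSpace E]

/-- The positively homogeneous extension to `E` of the convolution `h ∗ μ`, which is the function
`v ↦ ∫ u, h (R v u) ∂μ` on the unit sphere. -/
def zonalConv (μ : Measure E) (R : E → E ≃ₗᵢ[ℝ] E) (h : E → ℝ) (x : E) : ℝ :=
  ‖x‖ * ∫ u, h (R (‖x‖⁻¹ • x) u) ∂μ

lemma zonalConv_of_norm_eq_one (μ : Measure E) (R : E → E ≃ₗᵢ[ℝ] E) (h : E → ℝ) {v : E}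
    (hv : ‖v‖ = 1) : zonalConv μ R h v = ∫ u, h (R v u) ∂μ := by
  rw [zonalConv, hv, inv_one, one_smul, one_mul]

lemma zonalConv_smul (μ : Measure E) (R : E → E ≃ₗᵢ[ℝ] E) (h : E → ℝ) {c : ℝ} (hc : 0 < c)
    (x : E) : zonalConv μ R h (c • x) = c * zonalConv μ R h x := by
  have direction : ‖c • x‖⁻¹ • c • x = ‖x‖⁻¹ • x := by
    rw [norm_smul, Real.norm_of_nonneg hc.le, mul_inv, smul_smul, mul_right_comm,
      inv_mul_cancel₀ hc.ne', one_mul]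
  rw [zonalConv, direction, norm_smul, Real.norm_of_nonneg hc.le, mul_assoc, zonalConv]

variable [FiniteDimensional ℝ E] [BorelSpace E] {e : E} {μ : Measure E} {R : E → E ≃ₗᵢ[ℝ] E}
  {h : E → ℝ}

lemma zonalConv_plane (hμ : IsZonal e μ) (hR : IsPoleSection e R) (hh : IsSublinear h)
    (ι : ℂ →ₗᵢ[ℝ] E) (z : ℂ) :
    zonalConv μ R h (ι z) = ∫ u, h (planeSimilarity ι z (R (ι 1) u)) ∂μ := by
  rcases eq_or_ne z 0 with rfl | hz
  · simp [zonalConv, planeSimilarity_apply, hh.map_zero]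
  obtain ⟨c, hc⟩ : ∃ c : Circle, (‖z‖ : ℂ) * c = z :=
    ⟨Circle.exp z.arg, by rw [Circle.coe_exp, Complex.norm_mul_exp_arg_mul_I]⟩
  have direction : ‖ι z‖⁻¹ • ι z = ι c := by
    rw [ι.norm_map, ← map_smul, inv_smul_eq_iff₀ (norm_ne_zero_iff.2 hz) |>.2]
    rw [Complex.real_smul, hc]
  obtain ⟨g, det_g, g_apply⟩ := exists_rotation_eq_planeSimilarity ι c
  obtain ⟨R_one, det_R_one⟩ := hR (ι 1) (by simp)
  obtain ⟨R_c, det_R_c⟩ := hR (ι c) (by rw [ι.norm_map, Circle.norm_coe])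
  have same_pole : R (ι c) e = (g * R (ι 1)) e := by
    rw [R_c, LinearIsometryEquiv.coe_mul, Function.comp_apply, R_one, g_apply,
      planeSimilarity_map, mul_one]
  calc zonalConv μ R h (ι z) = ‖z‖ * ∫ u, h (R (ι c) u) ∂μ := by
        rw [zonalConv, direction, ι.norm_map]
    _ = ‖z‖ * ∫ u, h (planeSimilarity ι c (R (ι 1) u)) ∂μ := by
        rw [hμ.integral_comp_eq same_pole det_R_c (by rw [map_mul, det_g, det_R_one, one_mul])]
        simp only [LinearIsometryEquiv.coe_mul, Function.comp_apply, g_apply]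
    _ = ∫ u, h (planeSimilarity ι z (R (ι 1) u)) ∂μ := by
        rw [← integral_const_mul]
        refine integral_congr_ae (ae_of_all _ fun u => ?_)
        simp only
        rw [← hh.map_smul_of_nonneg (norm_nonneg z), ← planeSimilarity_ofReal ι (norm_nonneg z),
          ← planeSimilarity_mul, hc]

variable [IsFiniteMeasure μ]

lemma zonalConv_plane_reflection (hμ : IsZonal e μ) (hR : IsPoleSection e R)
    (hh : IsSublinear h) (ι : ℂ →ₗᵢ[ℝ] E) (z : ℂ) :
    zonalConv μ R h (ι z) = ∫ u, h (planeSimilarity ι z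
      ((LinearMap.range ι.toLinearMap).reflection (R (ι 1) u))) ∂μ := by
  have pole_mem : R (ι 1) e ∈ LinearMap.range ι.toLinearMap := by
    rw [(hR (ι 1) (by simp)).1]
    exact LinearMap.mem_range_self ι.toLinearMap 1
  rw [hμ.integral_comp_reflection (finrank_range_plane ι).ge pole_mem
    (fun w => h (planeSimilarity ι z w)), zonalConv_plane hμ hR hh]

lemma integral_planeSymmetrization (hμ : IsZonal e μ) (hint : Integrable id μ)
    (hR : IsPoleSection e R) (hh : IsSublinear h) (ι : ℂ →ₗᵢ[ℝ] E) (z : ℂ) :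
    ∫ u, planeSymmetrization h ι z (R (ι 1) u) ∂μ = 2 * zonalConv μ R h (ι z) := by
  simp only [planeSymmetrization]
  rw [integral_add (integrable_comp_planeSimilarity hint hh ι z _)
      (integrable_comp_planeSimilarity_reflection hint hh ι z _),
    ← zonalConv_plane hμ hR hh, ← zonalConv_plane_reflection hμ hR hh, two_mul]

lemma zonalConv_add_le (hμ : IsZonal e μ) (hint : Integrable id μ) (hR : IsPoleSection e R)
    (hE : 2 ≤ finrank ℝ E) (hh : IsSublinear h) (x y : E) :
    zonalConv μ R h (x + y) ≤ zonalConv μ R h x + zonalConv μ R h y := by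
  obtain ⟨ι, ⟨z, rfl⟩, ⟨z', rfl⟩⟩ := exists_linearIsometry_complex_mem_range hE x y
  let S (ζ : ℂ) (u : E) : ℝ := planeSymmetrization h ι ζ (R (ι 1) u)
  have integrable_S (ζ : ℂ) : Integrable (S ζ) μ :=
    integrable_planeSymmetrization hint hh ι ζ (R (ι 1))
  have integral_S (ζ : ℂ) : ∫ u, S ζ u ∂μ = 2 * zonalConv μ R h (ι ζ) :=
    integral_planeSymmetrization hμ hint hR hh ι ζ
  refine le_of_mul_le_mul_left ?_ (zero_lt_two' ℝ)
  calc 2 * zonalConv μ R h (ι z + ι z') = ∫ u, S (z + z') u ∂μ := by rw [integral_S, map_add]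
    _ ≤ ∫ u, S z u + S z' u ∂μ :=
        integral_mono (integrable_S _) ((integrable_S z).add (integrable_S z'))
          fun u => planeSymmetrization_add_le hh ι z z' (R (ι 1) u)
    _ = 2 * (zonalConv μ R h (ι z) + zonalConv μ R h (ι z')) := by
        rw [integral_add (integrable_S z) (integrable_S z'), integral_S, integral_S, mul_add]

lemma isSublinear_zonalConv (hμ : IsZonal e μ) (hint : Integrable id μ) (hR : IsPoleSection e R)
    (hE : 2 ≤ finrank ℝ E) (hh : IsSublinear h) : IsSublinear (zonalConv μ R h) where
  map_smul_of_pos _ hc x := zonalConv_smul μ R h hc x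
  map_add_le x y := zonalConv_add_le hμ hint hR hE hh x y

end Convolution

/-! ### The Minkowski valuation generated by a zonal measure -/

section Generated

variable {E : Type*} [NormedAddCommGroup E] [InnerProductSpace ℝ E] [MeasurableSpace E]

/-- The map `Φ` of convex bodies is generated by `μ` if `h_{Φ K} = h_K ∗ μ` for every `K`. -/
def IsGeneratedBy (μ : Measure E) (R : E → E ≃ₗᵢ[ℝ] E) (Φ : ConvexBody E → ConvexBody E) : Prop :=
  ∀ K v, ‖v‖ = 1 → supportFn (Φ K) v = ∫ u, supportFn (K : Set E) (R v u) ∂μ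

lemma integrable_supportFn_comp_isometry [BorelSpace E] [FiniteDimensional ℝ E] {μ : Measure E}
    (hint : Integrable id μ) (K : ConvexBody E) (g : E ≃ₗᵢ[ℝ] E) :
    Integrable (fun u => supportFn (K : Set E) (g u)) μ :=
  ((isSublinear_supportFn K.isCompact K.nonempty).comp_linearMap
    g.toLinearEquiv.toLinearMap).integrable hint

namespace IsGeneratedBy

variable {e : E} {μ : Measure E} {R : E → E ≃ₗᵢ[ℝ] E} {Φ : ConvexBody E → ConvexBody E}

lemma map_smul (hΦ : IsGeneratedBy μ R Φ) {c : ℝ} (hc : 0 ≤ c) (K : ConvexBody E) :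
    Φ (c • K) = c • Φ K :=
  convexBody_eq_of_supportFn_eq fun v hv => by
    simp only [hΦ _ v hv, ConvexBody.coe_smul, supportFn_smul_set hc, integral_const_mul]

variable [BorelSpace E]

-- Both `g⁻¹ * R v` and `R (g⁻¹ v)` are rotations taking the pole to `g⁻¹ v`.
lemma coe_eq_image_of_coe_eq_image (hΦ : IsGeneratedBy μ R Φ) (hμ : IsZonal e μ)
    (hR : IsPoleSection e R) {g : E ≃ₗᵢ[ℝ] E} (hg : isometryDet g = 1) {K K' : ConvexBody E}
    (hK : (K' : Set E) = g '' K) : (Φ K' : Set E) = g '' Φ K := by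
  let gΦK : ConvexBody E := ⟨g '' Φ K, (Φ K).convex.linear_image g.toLinearEquiv.toLinearMap,
    (Φ K).isCompact.image g.continuous, (Φ K).nonempty.image g⟩
  suffices Φ K' = gΦK from congrArg _ this
  refine convexBody_eq_of_supportFn_eq fun v hv => ?_
  have hv' : ‖g⁻¹ v‖ = 1 := (g⁻¹.norm_map v).trans hv
  have same_pole : (g⁻¹ * R v) e = R (g⁻¹ v) e := by
    rw [LinearIsometryEquiv.coe_mul, Function.comp_apply, (hR v hv).1, (hR _ hv').1]
  have det_left : isometryDet (g⁻¹ * R v) = 1 := by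
    rw [map_mul, map_inv, hg, (hR v hv).2, inv_one, one_mul]
  calc supportFn (Φ K') v = ∫ u, supportFn (K : Set E) ((g⁻¹ * R v) u) ∂μ := by
        simp only [hΦ K' v hv, hK, supportFn_image_isometry, LinearIsometryEquiv.coe_mul,
          Function.comp_apply]
    _ = ∫ u, supportFn (K : Set E) (R (g⁻¹ v) u) ∂μ :=
        hμ.integral_comp_eq same_pole det_left (hR _ hv').2 _
    _ = supportFn (gΦK : Set E) v := by
        rw [← hΦ K _ hv']
        exact (supportFn_image_isometry g _ v).symm

variable [FiniteDimensional ℝ E]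

lemma map_add_map_eq (hΦ : IsGeneratedBy μ R Φ) (hint : Integrable id μ) {K L M N : ConvexBody E}
    (hKL : Convex ℝ ((K : Set E) ∪ L)) (hM : (M : Set E) = (K : Set E) ∪ L)
    (hN : (N : Set E) = (K : Set E) ∩ L) : Φ K + Φ L = Φ M + Φ N := by
  have integrable := integrable_supportFn_comp_isometry hint
  refine convexBody_eq_of_supportFn_eq fun v hv => ?_
  simp only [ConvexBody.coe_add, supportFn_add (ConvexBody.isCompact _) (ConvexBody.nonempty _)
    (ConvexBody.isCompact _) (ConvexBody.nonempty _), hΦ _ v hv]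
  rw [← integral_add (integrable K _) (integrable L _),
    ← integral_add (integrable M _) (integrable N _)]
  simp only [hM, hN, supportFn_union_add_supportFn_inter K.isCompact K.nonempty L.isCompact
    L.nonempty hKL]

lemma map_translate_eq (hΦ : IsGeneratedBy μ R Φ) (hint : Integrable id μ)
    (hcent : ∀ x : E, ∫ u, ⟪x, u⟫ ∂μ = 0) {x : E} {K K' : ConvexBody E}
    (hK : (K' : Set E) = (fun y => x + y) '' K) : Φ K' = Φ K := by
  refine convexBody_eq_of_supportFn_eq fun v hv => ?_
  have inner_map (u : E) : ⟪R v u, x⟫ = ⟪(R v).symm x, u⟫ := by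
    rw [(R v).inner_map_eq_flip, real_inner_comm]
  simp only [hΦ _ v hv, hK, supportFn_translate K.isCompact K.nonempty, inner_map]
  have integrable_inner : Integrable (fun u => ⟪(R v).symm x, u⟫) μ := hint.const_inner _
  rw [integral_add (integrable_supportFn_comp_isometry hint K _) integrable_inner, hcent, add_zero]

lemma dist_map_le (hΦ : IsGeneratedBy μ R Φ) (hint : Integrable id μ) (K L : ConvexBody E) :
    dist (Φ K) (Φ L) ≤ (∫ u, ‖u‖ ∂μ) * dist K L := by
  refine dist_le_of_abs_supportFn_sub_le
    (mul_nonneg (integral_nonneg fun u => norm_nonneg u) dist_nonneg) fun v hv => ?_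
  rw [hΦ K v hv, hΦ L v hv, ← integral_sub (integrable_supportFn_comp_isometry hint K _)
    (integrable_supportFn_comp_isometry hint L _), ← integral_mul_const]
  have integrable_bound : Integrable (fun u => ‖u‖ * dist K L) μ := hint.norm.mul_const _
  rw [← Real.norm_eq_abs]
  refine norm_integral_le_of_norm_le integrable_bound (ae_of_all _ fun u => ?_)
  rw [← (R v).norm_map u]
  exact abs_supportFn_sub_le_norm_mul_dist K L (R v u)

protected lemma continuous (hΦ : IsGeneratedBy μ R Φ) (hint : Integrable id μ) : Continuous Φ :=
  (LipschitzWith.of_dist_le' (hΦ.dist_map_le hint)).continuous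

end IsGeneratedBy

variable [FiniteDimensional ℝ E] [BorelSpace E] {e : E} {μ : Measure E} [IsFiniteMeasure μ]
  {R : E → E ≃ₗᵢ[ℝ] E}

lemma exists_isGeneratedBy (hμ : IsZonal e μ) (hint : Integrable id μ) (hR : IsPoleSection e R)
    (hE : 2 ≤ finrank ℝ E) : ∃ Φ, IsGeneratedBy μ R Φ := by
  choose Φ hΦ using fun K : ConvexBody E => exists_convexBody_supportFn_eq
    (isSublinear_zonalConv hμ hint hR hE (isSublinear_supportFn K.isCompact K.nonempty))
  exact ⟨Φ, fun K v hv => (hΦ K v).trans (zonalConv_of_norm_eq_one μ R _ hv)⟩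

end Generated

lemma integrable_id_of_measure_compl_eq_zero {E : Type*} [NormedAddCommGroup E] [MeasurableSpace E]
    [BorelSpace E] [SecondCountableTopology E] {μ : Measure E} [IsFiniteMeasure μ] {s : Set E}
    (hs : Bornology.IsBounded s) (hμ : μ sᶜ = 0) : Integrable id μ := by
  obtain ⟨C, hC⟩ := hs.exists_norm_le
  refine .of_bound aestronglyMeasurable_id C ?_
  filter_upwards [mem_ae_iff.2 hμ] with u hu using hC u hu

theorem kiderlen_zonal_measure_generates_MVal_general {E : Type*} [NormedAddCommGroup E]
    [InnerProductSpace ℝ E] [FiniteDimensional ℝ E] [MeasurableSpace E] [BorelSpace E]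
    (hE : 2 ≤ finrank ℝ E) {e : E} {μ : Measure E} [IsFiniteMeasure μ] (hint : Integrable id μ)
    (hμ : IsZonal e μ) (hcent : ∀ x : E, ∫ u, ⟪x, u⟫ ∂μ = 0) {R : E → E ≃ₗᵢ[ℝ] E}
    (hR : IsPoleSection e R) :
    ∃ Ψ : ConvexBody E → ConvexBody E,
      IsGeneratedBy μ R Ψ
      ∧ (∀ K L M N : ConvexBody E,
          Convex ℝ ((K : Set E) ∪ L) → (M : Set E) = (K : Set E) ∪ L →
          (N : Set E) = (K : Set E) ∩ L → Ψ K + Ψ L = Ψ M + Ψ N)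
      ∧ Continuous Ψ
      ∧ (∀ (x : E) (K K' : ConvexBody E),
          (K' : Set E) = (fun y => x + y) '' (K : Set E) → Ψ K' = Ψ K)
      ∧ (∀ (c : ℝ), 0 < c → ∀ K : ConvexBody E, Ψ (c • K) = c • Ψ K)
      ∧ (∀ g : E ≃ₗᵢ[ℝ] E, isometryDet g = 1 →
          ∀ K K' : ConvexBody E, (K' : Set E) = g '' (K : Set E) →
            (Ψ K' : Set E) = g '' (Ψ K : Set E)) := by
  obtain ⟨Ψ, hΨ⟩ := exists_isGeneratedBy hμ hint hR hE
  exact ⟨Ψ, hΨ, fun _ _ _ _ hKL hM hN => hΨ.map_add_map_eq hint hKL hM hN, hΨ.continuous hint,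
    fun _ _ _ hK => hΨ.map_translate_eq hint hcent hK, fun _ hc K => hΨ.map_smul hc.le K,
    fun _ hg _ _ hK => hΨ.coe_eq_image_of_coe_eq_image hμ hR hg hK⟩

/-- Kiderlen: if `μ` is a non-negative zonal Borel measure on `S^{n-1}`
with center of mass at the origin, then for every convex body `K` the convolution
`h_K ∗ μ`, given at `v ∈ S^{n-1}` by `∫ h_K(R_v u) dμ(u)` for any rotation `R_v` taking
the pole `ē` to `v`, is the support function of a convex body `Ψ₁ K`, and
`Ψ₁ : K^n → K^n` is a continuous, translation invariant, `SO(n)` equivariant Minkowski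
valuation of degree 1. -/
theorem kiderlen_zonal_measure_generates_MVal (n : ℕ) (hn : 2 ≤ n)
    (e : Eucl n) (he : ‖e‖ = 1)
    (μ : Measure (Eucl n)) [IsFiniteMeasure μ]
    (hsupp : μ (Metric.sphere (0 : Eucl n) 1)ᶜ = 0)
    (hzonal : ∀ g : Eucl n ≃ₗᵢ[ℝ] Eucl n,
      g e = e → LinearEquiv.det g.toLinearEquiv = 1 → μ.map g = μ)
    (hcent : ∀ x : Eucl n, (∫ u, (⟪x, u⟫ : ℝ) ∂μ) = 0)
    (R : Eucl n → (Eucl n ≃ₗᵢ[ℝ] Eucl n))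
    (hR : ∀ v : Eucl n, ‖v‖ = 1 →
      R v e = v ∧ LinearEquiv.det (R v).toLinearEquiv = 1) :
    ∃ Ψ : ConvexBody (Eucl n) → ConvexBody (Eucl n),
      (∀ (K : ConvexBody (Eucl n)) (v : Eucl n), ‖v‖ = 1 →
        suppFn (Ψ K) v = ∫ u, suppFn K (R v u) ∂μ)
      ∧ (∀ K L M N : ConvexBody (Eucl n),
          Convex ℝ ((K : Set (Eucl n)) ∪ L) →
          (M : Set (Eucl n)) = (K : Set (Eucl n)) ∪ L →
          (N : Set (Eucl n)) = (K : Set (Eucl n)) ∩ L →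
          Ψ K + Ψ L = Ψ M + Ψ N)
      ∧ Continuous Ψ
      ∧ (∀ (x : Eucl n) (K K' : ConvexBody (Eucl n)),
          (K' : Set (Eucl n)) = (fun y => x + y) '' (K : Set (Eucl n)) → Ψ K' = Ψ K)
      ∧ (∀ (c : ℝ), 0 < c → ∀ K : ConvexBody (Eucl n), Ψ (c • K) = c • Ψ K)
      ∧ (∀ g : Eucl n ≃ₗᵢ[ℝ] Eucl n, LinearEquiv.det g.toLinearEquiv = 1 →
          ∀ K K' : ConvexBody (Eucl n), (K' : Set (Eucl n)) = g '' (K : Set (Eucl n)) →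
            (Ψ K' : Set (Eucl n)) = g '' (Ψ K : Set (Eucl n))) := by
  exact kiderlen_zonal_measure_generates_MVal_general (hn.trans_eq finrank_euclideanSpace_fin.symm)
    (integrable_id_of_measure_compl_eq_zero Metric.isBounded_sphere hsupp) hzonal hcent hR
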